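/- Let φ ∈ BV([−π,π)), 0 < ν < 1, κ > π, a ∈ ℝ, and define the 2π-periodic function V(x) = φ(x)/(|x|^ν (log|κ/x|)^a) for −π ≤ x < π. Then the Fourier coefficients of V satisfy |V̂(0)| ≤ C and |V̂(k)| ≤ C |k|^{ν−1} (log|k|)^{−a} for |k| ≥ 2, with C independent of k. -/

import Mathlib

open MeasureTheory Real

/-- The `k`-th Fourier coefficient of a `2π`-periodic function. -/
noncomputable def fc (f : ℝ → ℂ) (k : ℤ) : ℂ :=
  (1 / (2 * π)) * ∫ x in (0 : ℝ)..(2 * π), Complex.exp (-Complex.I * k * x) * f x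

/-! A function of bounded variation is a difference of bounded monotone functions, and a monotone
function is an average of indicators of rays. Hence integrating `φ h` costs no more than a constant
times the largest integral of `h` over a subinterval, and only the pure weight
`w(x) = 1 / (|x|^ν (log|κ/x|)^a)` matters. Its oscillatory integral is split at `|x| = 1/|k|`.
Below, `∫ w` is at most of order `w(1/|k|)/|k|` since `ν < 1`. Above, one integration by parts
gains `1/|k|` and leaves the total variation of `w`, of order `w(1/|k|)` since `ν > 0`. Potter's
bound, that `log (κ / x)` varies more slowly than any power of `x`, reduces both estimates to
integrals of powers. -/

open Set

section BoundedVariation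

variable {α : Type*} [LinearOrder α]

lemma exists_monotoneOn_sub_monotoneOn_abs_le {f : α → ℝ} {s : Set α}
    (hf : BoundedVariationOn f s) :
    ∃ (p q : α → ℝ) (M : ℝ), 0 ≤ M ∧ MonotoneOn p s ∧ MonotoneOn q s ∧ f = p - q ∧
      (∀ x ∈ s, |p x| ≤ M) ∧ ∀ x ∈ s, |q x| ≤ M := by
  obtain ⟨p, q, hp, hq, hpq, hvar⟩ :=
    hf.locallyBoundedVariationOn.exists_monotoneOn_sub_monotoneOn'
  rcases s.eq_empty_or_nonempty with rfl | ⟨c, hc⟩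
  · exact ⟨p, q, 0, le_rfl, hp, hq, hpq, by simp, by simp⟩
  have increment_le : ∀ x ∈ s, |p x - p c| + |q x - q c| ≤ (eVariationOn f s).toReal := by
    intro x hx
    refine le_trans (le_of_eq ?_) (variationOnFromTo.abs_le_eVariationOn hf (a := c) (b := x))
    rw [← hvar c hc x hx]
    rcases le_total c x with h | h
    · exact (abs_add_eq_add_abs_iff _ _).2
        (.inl ⟨sub_nonneg.2 (hp hc hx h), sub_nonneg.2 (hq hc hx h)⟩) |>.symm
    · exact (abs_add_eq_add_abs_iff _ _).2
        (.inr ⟨sub_nonpos.2 (hp hx hc h), sub_nonpos.2 (hq hx hc h)⟩) |>.symm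
  refine ⟨p, q, |p c| + |q c| + (eVariationOn f s).toReal, by positivity, hp, hq, hpq,
    fun x hx ↦ ?_, fun x hx ↦ ?_⟩
  · linarith [increment_le x hx, abs_sub_abs_le_abs_sub (p x) (p c), abs_nonneg (q x - q c),
      abs_nonneg (q c)]
  · linarith [increment_le x hx, abs_sub_abs_le_abs_sub (q x) (q c), abs_nonneg (p x - p c),
      abs_nonneg (p c)]

lemma ordConnected_inter_setOf_lt {m : α → ℝ} {s : Set α} (hs : s.OrdConnected)
    (hm : MonotoneOn m s) (t : ℝ) : (s ∩ {x | t < m x}).OrdConnected := by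
  refine ⟨fun x hx y hy z hz ↦ ?_⟩
  have hzs := hs.out hx.1 hy.1 hz
  exact ⟨hzs, lt_of_lt_of_le hx.2 (hm hx.1 hzs hz.1)⟩

lemma setIntegral_Ioc_indicator_Iio {E : Type*} [NormedAddCommGroup E] [NormedSpace ℝ E]
    [CompleteSpace E] {M r : ℝ} (hr : |r| ≤ M) (v : E) :
    ∫ t in Ioc (-M) M, (Iio r).indicator (fun _ ↦ v) t = (r + M) • v := by
  obtain ⟨hr₁, hr₂⟩ := abs_le.1 hr
  have hset : Ioc (-M) M ∩ Iio r = Ioo (-M) r := by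
    ext t
    exact ⟨fun h ↦ ⟨h.1.1, h.2⟩, fun h ↦ ⟨⟨h.1, h.2.le.trans hr₂⟩, h.2⟩⟩
  rw [setIntegral_indicator measurableSet_Iio, hset, setIntegral_const,
    Real.volume_real_Ioo_of_le hr₁, sub_neg_eq_add]

variable [TopologicalSpace α] [OrderClosedTopology α] [MeasurableSpace α] [BorelSpace α]
  {E : Type*} [NormedAddCommGroup E] [NormedSpace ℝ E]
  {μ : Measure α} {s : Set α} {h : α → E} {B : ℝ}

lemma integrableOn_smul_of_monotoneOn {m : α → ℝ} {M : ℝ} (hs : s.OrdConnected)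
    (hm : MonotoneOn m s) (hmM : ∀ x ∈ s, |m x| ≤ M) (hh : IntegrableOn h s μ) :
    IntegrableOn (fun x ↦ m x • h x) s μ :=
  Integrable.bdd_smul hh M
    (aemeasurable_restrict_of_monotoneOn hs.measurableSet hm).aestronglyMeasurable
    (ae_restrict_of_forall_mem hs.measurableSet hmM)

lemma integrableOn_smul_of_boundedVariationOn {f : α → ℝ} (hs : s.OrdConnected)
    (hf : BoundedVariationOn f s) (hh : IntegrableOn h s μ) :
    IntegrableOn (fun x ↦ f x • h x) s μ := by
  obtain ⟨p, q, M, -, hp, hq, rfl, hpM, hqM⟩ := exists_monotoneOn_sub_monotoneOn_abs_le hf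
  simpa only [Pi.sub_apply, sub_smul] using!
    (integrableOn_smul_of_monotoneOn hs hp hpM hh).sub
      (integrableOn_smul_of_monotoneOn hs hq hqM hh)

variable [CompleteSpace E] [SFinite μ]

-- Layer cake: `m + M` is the integral over heights `t ∈ (-M, M]` of the indicators of `{t < m}`.
lemma setIntegral_smul_eq_integral_superlevel {m : α → ℝ} {M : ℝ} (hs : s.OrdConnected)
    (hm : MonotoneOn m s) (hmM : ∀ x ∈ s, |m x| ≤ M) (hh : IntegrableOn h s μ) :
    ∫ x in s, m x • h x ∂μ =
      (∫ t in Ioc (-M) M, ∫ x in s ∩ {x | t < m x}, h x ∂μ) - M • ∫ x in s, h x ∂μ := by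
  let F : α → ℝ → E := fun x t ↦ (Iio (m x)).indicator (fun _ ↦ h x) t
  have hF : Integrable (Function.uncurry F) ((μ.restrict s).prod (volume.restrict (Ioc (-M) M))) :=
    (hh.comp_fst _).indicator₀ <| nullMeasurableSet_lt measurable_snd.aemeasurable
      (aemeasurable_restrict_of_monotoneOn hs.measurableSet hm).comp_fst
  have superlevel (t : ℝ) : ∫ x in s, F x t ∂μ = ∫ x in s ∩ {x | t < m x}, h x ∂μ := by
    have hlevel := (ordConnected_inter_setOf_lt hs hm t).measurableSet
    rw [← inter_eq_right.2 (inter_subset_left (s := s) (t := {x | t < m x})),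
      ← setIntegral_indicator hlevel]
    refine setIntegral_congr_fun hs.measurableSet fun x hx ↦ ?_
    simp only [F, indicator, mem_Iio, mem_inter_iff, hx, true_and, mem_ofPred_eq]
  rw [eq_sub_iff_add_eq, ← integral_smul,
    ← integral_add (integrableOn_smul_of_monotoneOn hs hm hmM hh) (hh.fun_smul M)]
  calc ∫ x in s, (m x • h x + M • h x) ∂μ = ∫ x in s, (∫ t in Ioc (-M) M, F x t) ∂μ :=
        setIntegral_congr_fun hs.measurableSet fun x hx ↦ by
          simp only [F, setIntegral_Ioc_indicator_Iio (hmM x hx), add_smul]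
    _ = ∫ t in Ioc (-M) M, ∫ x in s, F x t ∂μ := integral_integral_swap hF
    _ = ∫ t in Ioc (-M) M, ∫ x in s ∩ {x | t < m x}, h x ∂μ := by simp only [superlevel]

lemma norm_setIntegral_smul_le_of_monotoneOn {m : α → ℝ} {M : ℝ} (hs : s.OrdConnected)
    (hm : MonotoneOn m s) (hM : 0 ≤ M) (hmM : ∀ x ∈ s, |m x| ≤ M) (hh : IntegrableOn h s μ)
    (hB : ∀ J ⊆ s, J.OrdConnected → ‖∫ x in J, h x ∂μ‖ ≤ B) :
    ‖∫ x in s, m x • h x ∂μ‖ ≤ 3 * M * B := by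
  have hlevels : ‖∫ t in Ioc (-M) M, ∫ x in s ∩ {x | t < m x}, h x ∂μ‖ ≤ B * (2 * M) := by
    have := norm_setIntegral_le_of_norm_le_const (μ := volume) (s := Ioc (-M) M) (by simp)
      fun t _ ↦ hB _ inter_subset_left (ordConnected_inter_setOf_lt hs hm t)
    rwa [Real.volume_real_Ioc_of_le (by linarith), sub_neg_eq_add, ← two_mul] at this
  have hbase : ‖M • ∫ x in s, h x ∂μ‖ ≤ M * B := by
    rw [norm_smul, Real.norm_of_nonneg hM]
    exact mul_le_mul_of_nonneg_left (hB s subset_rfl hs) hM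
  rw [setIntegral_smul_eq_integral_superlevel hs hm hmM hh]
  linarith [norm_sub_le_of_le hlevels hbase]

lemma exists_norm_setIntegral_smul_le_of_boundedVariationOn {f : α → ℝ} (hs : s.OrdConnected)
    (hf : BoundedVariationOn f s) :
    ∃ C, 0 ≤ C ∧ ∀ (h : α → E) (B : ℝ), IntegrableOn h s μ →
      (∀ J ⊆ s, J.OrdConnected → ‖∫ x in J, h x ∂μ‖ ≤ B) → ‖∫ x in s, f x • h x ∂μ‖ ≤ C * B := by
  obtain ⟨p, q, M, hM, hp, hq, rfl, hpM, hqM⟩ := exists_monotoneOn_sub_monotoneOn_abs_le hf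
  refine ⟨6 * M, by positivity, fun h B hh hB ↦ ?_⟩
  simp only [Pi.sub_apply, sub_smul]
  rw [integral_sub (integrableOn_smul_of_monotoneOn hs hp hpM hh)
    (integrableOn_smul_of_monotoneOn hs hq hqM hh)]
  linarith [norm_sub_le_of_le (norm_setIntegral_smul_le_of_monotoneOn hs hp hM hpM hh hB)
    (norm_setIntegral_smul_le_of_monotoneOn hs hq hM hqM hh hB)]

end BoundedVariation

section FourierMode

/-- The oscillating factor `e^{-ikx}` of the Fourier coefficient, for an arbitrary real frequency
`k` so that no cast from `ℤ` intervenes in the estimates. -/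
noncomputable def fourierMode (k x : ℝ) : ℂ := Complex.exp (-Complex.I * k * x)

lemma norm_fourierMode (k x : ℝ) : ‖fourierMode k x‖ = 1 := by
  simp [fourierMode, Complex.norm_exp]

lemma continuous_fourierMode (k : ℝ) : Continuous (fourierMode k) := by
  unfold fourierMode
  fun_prop

lemma fourierMode_neg_right (k x : ℝ) : fourierMode k (-x) = fourierMode (-k) x := by
  simp [fourierMode]

lemma periodic_fourierMode_intCast (k : ℤ) : Function.Periodic (fourierMode k) (2 * π) := by
  intro x
  refine Complex.exp_eq_exp_iff_exists_int.2 ⟨-k, ?_⟩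
  push_cast
  ring

lemma hasDerivAt_fourierMode_div {k : ℝ} (hk : k ≠ 0) (x : ℝ) :
    HasDerivAt (fun x ↦ fourierMode k x / (-Complex.I * k)) (fourierMode k x) x := by
  have hc : -Complex.I * (k : ℂ) ≠ 0 := by simp [hk]
  have hlin : HasDerivAt (fun x : ℝ ↦ -Complex.I * k * (x : ℂ)) (-Complex.I * k) x := by
    simpa using (Complex.ofRealCLM.hasDerivAt (x := x)).const_mul (-Complex.I * (k : ℂ))
  simpa only [mul_div_cancel_right₀ _ hc] using! hlin.cexp.div_const (-Complex.I * (k : ℂ))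

lemma norm_integral_fourierMode_mul_le {k s t : ℝ} {u u' : ℝ → ℂ} (hk : k ≠ 0) (hst : s ≤ t)
    (hu : ∀ x ∈ Icc s t, HasDerivAt u (u' x) x) (hu' : IntervalIntegrable u' volume s t) :
    ‖∫ x in s..t, fourierMode k x * u x‖ ≤ (‖u s‖ + ‖u t‖ + ∫ x in s..t, ‖u' x‖) / |k| := by
  let E : ℝ → ℂ := fun x ↦ fourierMode k x / (-Complex.I * k)
  have norm_E (x : ℝ) : ‖E x‖ = 1 / |k| := by simp [E, norm_fourierMode]
  have parts : ∫ x in s..t, fourierMode k x * u x =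
      u t * E t - u s * E s - ∫ x in s..t, u' x * E x := by
    simp only [mul_comm (fourierMode k _)]
    exact intervalIntegral.integral_mul_deriv_eq_deriv_mul (by rwa [uIcc_of_le hst])
      (fun x _ ↦ hasDerivAt_fourierMode_div hk x) hu'
      ((continuous_fourierMode k).intervalIntegrable s t)
  have remainder : ‖∫ x in s..t, u' x * E x‖ ≤ (∫ x in s..t, ‖u' x‖) * (1 / |k|) := by
    rw [← intervalIntegral.integral_mul_const]
    refine (intervalIntegral.norm_integral_le_integral_norm hst).trans_eq ?_
    simp only [norm_mul, norm_E]
  rw [parts]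
  refine (norm_sub_le_of_le (norm_sub_le _ _) remainder).trans_eq ?_
  rw [norm_mul, norm_mul, norm_E, norm_E]
  ring

end FourierMode

section PowLogWeight

variable {κ a b ν ε x y : ℝ}

lemma log_div_pos (hx : 0 < x) (hxκ : x < κ) : 0 < log (κ / x) :=
  log_pos ((one_lt_div hx).2 hxκ)

lemma rpow_le_rpow_abs_mul_rpow {c u v : ℝ} (p : ℝ) (hu : 0 < u) (hv : 0 < v) (huv : u ≤ c * v)
    (hvu : v ≤ c * u) : u ^ p ≤ c ^ |p| * v ^ p := by
  have hc : 0 < c := pos_of_mul_pos_left (hu.trans_le huv) hv.le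
  rcases le_total 0 p with hp | hp
  · rw [abs_of_nonneg hp, ← mul_rpow hc.le hv.le]
    exact rpow_le_rpow hu.le huv hp
  · rw [abs_of_nonpos hp, rpow_neg hc.le, ← inv_rpow hc.le, ← mul_rpow (by positivity) hv.le]
    exact rpow_le_rpow_of_nonpos (by positivity) ((inv_mul_le_iff₀ hc).2 hvu) hp

lemma log_div_le_mul_rpow_mul_log_div (hε : 0 < ε) (hx : 0 < x) (hxy : x ≤ y) (hyb : y ≤ b)
    (hbκ : b < κ) :
    log (κ / x) ≤ (1 + 1 / (ε * log (κ / b))) * (y / x) ^ ε * log (κ / y) := by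
  have hy : 0 < y := hx.trans_le hxy
  have hb : 0 < b := hy.trans_le hyb
  have hκ : 0 < κ := hb.trans hbκ
  have hLb : 0 < log (κ / b) := log_div_pos hb hbκ
  have hLy : 0 < log (κ / y) := log_div_pos hy (hyb.trans_lt hbκ)
  have hLby : log (κ / b) ≤ log (κ / y) := by gcongr
  have hpow : 1 ≤ (y / x) ^ ε := one_le_rpow ((one_le_div hx).2 hxy) hε.le
  calc log (κ / x) = log (κ / y) + log (y / x) := by
        rw [← log_mul (by positivity) (by positivity), div_mul_div_cancel₀ hy.ne']
    _ ≤ (y / x) ^ ε * log (κ / y) + (y / x) ^ ε / ε * (log (κ / y) / log (κ / b)) := by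
        refine add_le_add (le_mul_of_one_le_left hLy.le hpow) ?_
        exact (log_le_rpow_div (by positivity) hε).trans
          (le_mul_of_one_le_right (by positivity) ((one_le_div hLb).2 hLby))
    _ = _ := by field_simp

lemma exists_log_div_rpow_le (hb : 0 < b) (hbκ : b < κ) (p : ℝ) (hε : 0 < ε) :
    ∃ C, 0 < C ∧ ∀ x y, 0 < x → x ≤ y → y ≤ b →
      log (κ / x) ^ p ≤ C * (y / x) ^ ε * log (κ / y) ^ p ∧
      log (κ / y) ^ p ≤ C * (y / x) ^ ε * log (κ / x) ^ p := by
  have hLb : 0 < log (κ / b) := log_div_pos hb hbκ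
  have hδ : 0 < ε / (|p| + 1) := by positivity
  set δ := ε / (|p| + 1)
  set c := 1 + 1 / (δ * log (κ / b))
  have hc : 1 ≤ c := le_add_of_nonneg_right (by positivity)
  refine ⟨c ^ |p|, by positivity, fun x y hx hxy hyb ↦ ?_⟩
  have hy : 0 < y := hx.trans_le hxy
  have hκ : 0 < κ := hb.trans hbκ
  have hLx : 0 < log (κ / x) := log_div_pos hx ((hxy.trans hyb).trans_lt hbκ)
  have hLy : 0 < log (κ / y) := log_div_pos hy (hyb.trans_lt hbκ)
  have hyx : 1 ≤ y / x := (one_le_div hx).2 hxy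
  have hxy' : log (κ / x) ≤ c * (y / x) ^ δ * log (κ / y) :=
    log_div_le_mul_rpow_mul_log_div hδ hx hxy hyb hbκ
  have hyx' : log (κ / y) ≤ c * (y / x) ^ δ * log (κ / x) :=
    (by gcongr : log (κ / y) ≤ log (κ / x)).trans
      (le_mul_of_one_le_left hLx.le (one_le_mul_of_one_le_of_one_le hc (one_le_rpow hyx hδ.le)))
  have hfactor : (c * (y / x) ^ δ) ^ |p| ≤ c ^ |p| * (y / x) ^ ε := by
    rw [mul_rpow (by positivity) (by positivity), ← rpow_mul (by positivity)]
    gcongr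
    rw [div_mul_eq_mul_div, div_le_iff₀ (by positivity)]
    nlinarith
  exact ⟨(rpow_le_rpow_abs_mul_rpow p hLx hLy hxy' hyx').trans (by gcongr),
    (rpow_le_rpow_abs_mul_rpow p hLy hLx hyx' hxy').trans (by gcongr)⟩

/-- The singular weight `1 / (|x|^ν (log|κ/x|)^a)`, so that the potential is `φ` times it. At
`x = 0` it takes the junk value `0` when `ν ≠ 0`. -/
noncomputable def powLogWeight (ν κ a x : ℝ) : ℝ := (|x| ^ ν * log |κ / x| ^ a)⁻¹

lemma powLogWeight_neg (ν κ a x : ℝ) : powLogWeight ν κ a (-x) = powLogWeight ν κ a x := by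
  simp [powLogWeight, abs_div]

lemma measurable_powLogWeight (ν κ a : ℝ) : Measurable (powLogWeight ν κ a) := by
  unfold powLogWeight
  fun_prop

lemma powLogWeight_eq (hx : 0 < x) (hxκ : x < κ) :
    powLogWeight ν κ a x = x ^ (-ν) * log (κ / x) ^ (-a) := by
  rw [powLogWeight, abs_of_pos hx, abs_of_pos (div_pos (hx.trans hxκ) hx), rpow_neg hx.le,
    rpow_neg (log_div_pos hx hxκ).le, mul_inv]

lemma powLogWeight_pos (hx : 0 < x) (hxκ : x < κ) : 0 < powLogWeight ν κ a x := by
  have := log_div_pos hx hxκ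
  rw [powLogWeight_eq hx hxκ]
  positivity

lemma exists_powLogWeight_le (ν a : ℝ) (hb : 0 < b) (hbκ : b < κ) (hε : 0 < ε) :
    ∃ C, 0 < C ∧ ∀ x y, 0 < x → x ≤ y → y ≤ b →
      powLogWeight ν κ a x ≤ C * (y / x) ^ (ν + ε) * powLogWeight ν κ a y ∧
      powLogWeight ν κ a y ≤ C * (y / x) ^ (ε - ν) * powLogWeight ν κ a x := by
  obtain ⟨C, hC, hlog⟩ := exists_log_div_rpow_le hb hbκ (-a) hε
  refine ⟨C, hC, fun x y hx hxy hyb ↦ ?_⟩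
  have hy : 0 < y := hx.trans_le hxy
  obtain ⟨hlog_x, hlog_y⟩ := hlog x y hx hxy hyb
  rw [powLogWeight_eq hx ((hxy.trans hyb).trans_lt hbκ), powLogWeight_eq hy (hyb.trans_lt hbκ)]
  have hpow_x : x ^ (-ν) = (y / x) ^ ν * y ^ (-ν) := by
    rw [rpow_neg hx.le, rpow_neg hy.le, div_rpow hy.le hx.le]
    field_simp
  have hpow_y : y ^ (-ν) = (y / x) ^ (-ν) * x ^ (-ν) := by
    rw [← mul_rpow (by positivity) hx.le, div_mul_cancel₀ _ hx.ne']
  constructor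
  · calc x ^ (-ν) * log (κ / x) ^ (-a)
        ≤ x ^ (-ν) * (C * (y / x) ^ ε * log (κ / y) ^ (-a)) := by gcongr
      _ = _ := by rw [hpow_x, rpow_add (by positivity)]; ring
  · calc y ^ (-ν) * log (κ / y) ^ (-a)
        ≤ y ^ (-ν) * (C * (y / x) ^ ε * log (κ / x) ^ (-a)) := by gcongr
      _ = _ := by rw [hpow_y, sub_eq_add_neg, rpow_add (by positivity)]; ring

lemma exists_powLogWeight_inv_div_le (ν a : ℝ) (hκ : 1 ≤ κ) :
    ∃ C, 0 < C ∧ ∀ r, 2 ≤ r → powLogWeight ν κ a r⁻¹ / r ≤ C * (r ^ (ν - 1) * log r ^ (-a)) := by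
  set c := 1 + log κ / log 2
  have hlogκ : 0 ≤ log κ := log_nonneg hκ
  have hlog2 : 0 < log 2 := log_pos one_lt_two
  have hc : 1 ≤ c := le_add_of_nonneg_right (by positivity)
  refine ⟨c ^ |-a|, by positivity, fun r hr ↦ ?_⟩
  have hr0 : 0 < r := by linarith
  have hlogr : log 2 ≤ log r := log_le_log two_pos hr
  have hlogr0 : 0 < log r := hlog2.trans_le hlogr
  have hinv : r⁻¹ < κ := (inv_lt_one_of_one_lt₀ (by linarith)).trans_le hκ
  have log_eq : log (κ / r⁻¹) = log κ + log r := by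
    rw [div_inv_eq_mul, log_mul (by positivity) hr0.ne']
  have log_le : log (κ / r⁻¹) ≤ c * log r := by
    have : log κ ≤ log κ / log 2 * log r := by
      rw [div_mul_eq_mul_div]
      exact (le_div_iff₀ hlog2).2 (mul_le_mul_of_nonneg_left hlogr hlogκ)
    rw [log_eq]
    linarith
  have le_log : log r ≤ c * log (κ / r⁻¹) :=
    (by linarith : log r ≤ log (κ / r⁻¹)).trans
      (le_mul_of_one_le_left (by linarith) hc)
  have log_rpow_le : log (κ / r⁻¹) ^ (-a) ≤ c ^ |-a| * log r ^ (-a) :=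
    rpow_le_rpow_abs_mul_rpow _ (by linarith) hlogr0 log_le le_log
  calc powLogWeight ν κ a r⁻¹ / r = r ^ (ν - 1) * log (κ / r⁻¹) ^ (-a) := by
        rw [powLogWeight_eq (by positivity) hinv, inv_rpow hr0.le, rpow_neg hr0.le, inv_inv,
          rpow_sub_one hr0.ne']
        ring
    _ ≤ r ^ (ν - 1) * (c ^ |-a| * log r ^ (-a)) := by gcongr
    _ = _ := by ring

lemma exists_powLogWeight_le_mul (a : ℝ) (hν : 0 < ν) (hb : 0 < b) (hbκ : b < κ) :
    ∃ C, 0 < C ∧ ∀ x y, 0 < x → x ≤ y → y ≤ b →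
      powLogWeight ν κ a y ≤ C * powLogWeight ν κ a x := by
  obtain ⟨C, hC, hw⟩ := exists_powLogWeight_le ν a hb hbκ hν
  refine ⟨C, hC, fun x y hx hxy hyb ↦ ?_⟩
  simpa only [sub_self, rpow_zero, mul_one] using (hw x y hx hxy hyb).2

lemma exists_integral_powLogWeight_le (a : ℝ) (hν : ν < 1) (hb : 0 < b) (hbκ : b < κ) :
    ∃ C, 0 < C ∧ ∀ d, 0 < d → d ≤ b → IntervalIntegrable (powLogWeight ν κ a) volume 0 d ∧
      ∫ x in 0..d, powLogWeight ν κ a x ≤ C * (d * powLogWeight ν κ a d) := by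
  obtain ⟨C, hC, hw⟩ :=
    exists_powLogWeight_le ν a hb hbκ (half_pos (sub_pos.2 hν))
  set r := ν + (1 - ν) / 2
  have hr : 0 < 1 - r := by simp only [r]; linarith
  refine ⟨C / (1 - r), by positivity, fun d hd hdb ↦ ?_⟩
  let g : ℝ → ℝ := fun x ↦ C * powLogWeight ν κ a d * d ^ r * x ^ (-r)
  have hg : IntervalIntegrable g volume 0 d :=
    (intervalIntegral.intervalIntegrable_rpow' (by linarith)).const_mul _
  have weight_le : ∀ x ∈ Ioc 0 d, powLogWeight ν κ a x ≤ g x := by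
    intro x hx
    refine ((hw x d hx.1 hx.2 hdb).1).trans_eq ?_
    simp only [g]
    rw [div_rpow hd.le hx.1.le, rpow_neg hx.1.le]
    ring
  have weight_nonneg : ∀ x ∈ Ioc 0 d, 0 ≤ powLogWeight ν κ a x := fun x hx ↦
    (powLogWeight_pos hx.1 ((hx.2.trans hdb).trans_lt hbκ)).le
  have hwint : IntervalIntegrable (powLogWeight ν κ a) volume 0 d := by
    refine hg.mono_fun (measurable_powLogWeight ν κ a).aestronglyMeasurable ?_
    rw [uIoc_of_le hd.le]
    refine ae_restrict_of_forall_mem measurableSet_Ioc fun x hx ↦ ?_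
    exact abs_le_abs_of_nonneg (weight_nonneg x hx) (weight_le x hx)
  refine ⟨hwint, ?_⟩
  calc ∫ x in 0..d, powLogWeight ν κ a x ≤ ∫ x in 0..d, g x :=
        intervalIntegral.integral_mono_on_of_le_Ioo hd.le hwint hg fun x hx ↦
          weight_le x (Ioo_subset_Ioc_self hx)
    _ = C * powLogWeight ν κ a d * d ^ r * (d ^ (1 - r) / (1 - r)) := by
        simp only [g]
        rw [intervalIntegral.integral_const_mul, integral_rpow (.inl (by linarith)),
          neg_add_eq_sub, zero_rpow hr.ne', sub_zero]
    _ = C / (1 - r) * (d ^ r * d ^ (1 - r) * powLogWeight ν κ a d) := by ring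
    _ = C / (1 - r) * (d * powLogWeight ν κ a d) := by
        rw [← rpow_add hd, add_sub_cancel, rpow_one]

lemma hasDerivAt_powLogWeight (ν a : ℝ) (hx : 0 < x) (hxκ : x < κ) :
    HasDerivAt (powLogWeight ν κ a) (powLogWeight ν κ a x / x * (a / log (κ / x) - ν)) x := by
  have hL := log_div_pos hx hxκ
  have hκ := hx.trans hxκ
  have hlog : HasDerivAt (fun y ↦ log (κ / y)) (-x⁻¹) x := by
    refine (((hasDerivAt_const x κ).fun_div (hasDerivAt_id' x) hx.ne').log
      (by positivity)).congr_deriv ?_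
    field_simp
    ring
  have hprod := (hasDerivAt_rpow_const (p := -ν) (.inl hx.ne')).mul
    (hlog.rpow_const (p := -a) (.inl hL.ne'))
  refine (hprod.congr_of_eventuallyEq ?_).congr_deriv ?_
  · filter_upwards [Ioo_mem_nhds hx hxκ] with y hy using powLogWeight_eq hy.1 hy.2
  · rw [powLogWeight_eq hx hxκ, rpow_sub_one hx.ne', rpow_sub_one hL.ne']
    field_simp
    ring

lemma continuousOn_powLogWeight_div (ν κ a : ℝ) :
    ContinuousOn (fun x ↦ powLogWeight ν κ a x / x) (Ioo 0 κ) := fun _ hx ↦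
  ((hasDerivAt_powLogWeight ν a hx.1 hx.2).continuousAt.div continuousAt_id
    hx.1.ne').continuousWithinAt

lemma continuousOn_deriv_powLogWeight (ν κ a : ℝ) :
    ContinuousOn (deriv (powLogWeight ν κ a)) (Ioo 0 κ) := by
  have hlog : ContinuousOn (fun x ↦ log (κ / x)) (Ioo 0 κ) :=
    (continuousOn_const.div continuousOn_id fun x hx ↦ hx.1.ne').log
      fun x hx ↦ (div_pos (hx.1.trans hx.2) hx.1).ne'
  have hformula : ContinuousOn
      (fun x ↦ powLogWeight ν κ a x / x * (a / log (κ / x) - ν)) (Ioo 0 κ) :=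
    (continuousOn_powLogWeight_div ν κ a).mul ((continuousOn_const.div hlog fun x hx ↦
      (log_div_pos hx.1 hx.2).ne').sub continuousOn_const)
  exact hformula.congr fun x hx ↦ (hasDerivAt_powLogWeight ν a hx.1 hx.2).deriv

lemma abs_deriv_powLogWeight_le (ν a : ℝ) (hx : 0 < x) (hxb : x ≤ b) (hbκ : b < κ) :
    |deriv (powLogWeight ν κ a) x| ≤
      (|a| / log (κ / b) + |ν|) * (powLogWeight ν κ a x / x) := by
  have hxκ := hxb.trans_lt hbκ
  have hb := hx.trans_le hxb
  have hκ := hx.trans hxκ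
  have hLb : 0 < log (κ / b) := log_div_pos hb hbκ
  have hL : log (κ / b) ≤ log (κ / x) := by gcongr
  have hw : 0 < powLogWeight ν κ a x := powLogWeight_pos hx hxκ
  rw [(hasDerivAt_powLogWeight ν a hx hxκ).deriv, abs_mul, abs_of_pos (by positivity), mul_comm]
  gcongr
  refine (abs_sub _ _).trans ?_
  rw [abs_div, abs_of_pos (hLb.trans_le hL)]
  gcongr

lemma exists_integral_powLogWeight_div_le (a : ℝ) (hν : 0 < ν) (hb : 0 < b) (hbκ : b < κ) :
    ∃ C, 0 < C ∧ ∀ d t, 0 < d → d ≤ t → t ≤ b →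
      ∫ x in d..t, powLogWeight ν κ a x / x ≤ C * powLogWeight ν κ a d := by
  obtain ⟨C, hC, hw⟩ := exists_powLogWeight_le ν a hb hbκ (half_pos hν)
  set r := ν / 2
  have hr : 0 < r := half_pos hν
  refine ⟨C / r, by positivity, fun d t hd hdt htb ↦ ?_⟩
  have ht := hd.trans_le hdt
  have hwd : 0 < powLogWeight ν κ a d := powLogWeight_pos hd (by linarith)
  have zero_notMem : (0 : ℝ) ∉ uIcc d t := notMem_uIcc_of_lt hd ht
  let g : ℝ → ℝ := fun x ↦ C * powLogWeight ν κ a d * d ^ r * x ^ (-r - 1)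
  have hg : IntervalIntegrable g volume d t :=
    (intervalIntegral.intervalIntegrable_rpow (.inr zero_notMem)).const_mul _
  have weight_div_le : ∀ x ∈ Icc d t, powLogWeight ν κ a x / x ≤ g x := by
    intro x hx
    have hx0 := hd.trans_le hx.1
    have hwx := (hw d x hd hx.1 (hx.2.trans htb)).2
    rw [show r - ν = -r by simp only [r]; ring, ← inv_div, rpow_neg_eq_inv_rpow, inv_inv,
      div_rpow hd.le hx0.le] at hwx
    refine (div_le_div_of_nonneg_right hwx hx0.le).trans_eq ?_
    simp only [g]
    rw [rpow_sub_one hx0.ne', rpow_neg hx0.le]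
    ring
  calc ∫ x in d..t, powLogWeight ν κ a x / x ≤ ∫ x in d..t, g x :=
        intervalIntegral.integral_mono_on hdt (ContinuousOn.intervalIntegrable_of_Icc hdt <|
          (continuousOn_powLogWeight_div ν κ a).mono
            (Icc_subset_Ioo hd (htb.trans_lt hbκ))) hg weight_div_le
    _ = C * powLogWeight ν κ a d * d ^ r * ((d ^ (-r) - t ^ (-r)) / r) := by
        simp only [g]
        rw [intervalIntegral.integral_const_mul,
          integral_rpow (.inr ⟨by linarith, zero_notMem⟩), sub_add_cancel, div_neg, ← neg_div,
          neg_sub]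
    _ ≤ C * powLogWeight ν κ a d * d ^ r * (d ^ (-r) / r) := by
        gcongr
        exact sub_le_self _ (by positivity)
    _ = C / r * (d ^ r * d ^ (-r) * powLogWeight ν κ a d) := by ring
    _ = C / r * powLogWeight ν κ a d := by
        rw [← rpow_add hd, add_neg_cancel, rpow_zero, one_mul]

lemma exists_integral_abs_deriv_powLogWeight_le (a : ℝ) (hν : 0 < ν) (hb : 0 < b)
    (hbκ : b < κ) :
    ∃ C, 0 < C ∧ ∀ d t, 0 < d → d ≤ t → t ≤ b →
      ∫ x in d..t, |deriv (powLogWeight ν κ a) x| ≤ C * powLogWeight ν κ a d := by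
  obtain ⟨C, hC, hdiv⟩ := exists_integral_powLogWeight_div_le a hν hb hbκ
  have hLb : 0 < log (κ / b) := log_div_pos hb hbκ
  refine ⟨(|a| / log (κ / b) + |ν|) * C, by positivity, fun d t hd hdt htb ↦ ?_⟩
  have hsub : Icc d t ⊆ Ioo 0 κ := Icc_subset_Ioo hd (htb.trans_lt hbκ)
  calc ∫ x in d..t, |deriv (powLogWeight ν κ a) x|
      ≤ ∫ x in d..t, (|a| / log (κ / b) + |ν|) * (powLogWeight ν κ a x / x) :=
        intervalIntegral.integral_mono_on hdt
          (((continuousOn_deriv_powLogWeight ν κ a).mono hsub).intervalIntegrable_of_Icc hdt).abs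
          ((((continuousOn_powLogWeight_div ν κ a).mono hsub).intervalIntegrable_of_Icc
            hdt).const_mul _)
          fun x hx ↦ abs_deriv_powLogWeight_le ν a (hd.trans_le hx.1) (hx.2.trans htb) hbκ
    _ ≤ (|a| / log (κ / b) + |ν|) * (C * powLogWeight ν κ a d) := by
        rw [intervalIntegral.integral_const_mul]
        gcongr
        exact hdiv d t hd hdt htb
    _ = _ := by ring

end PowLogWeight

section Oscillation

lemma exists_setIntegral_eq_intervalIntegral_of_ordConnected {E : Type*} [NormedAddCommGroup E]
    [NormedSpace ℝ E] {J : Set ℝ} {a b : ℝ} (hab : a ≤ b) (hJ : J.OrdConnected)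
    (hJab : J ⊆ Icc a b) :
    ∃ s ∈ Icc a b, ∃ t ∈ Icc a b, ∀ f : ℝ → E, ∫ x in J, f x = ∫ x in s..t, f x := by
  rcases J.eq_empty_or_nonempty with rfl | hne
  · exact ⟨a, ⟨le_rfl, hab⟩, a, ⟨le_rfl, hab⟩, by simp⟩
  have hbelow : BddBelow J := bddBelow_Icc.mono hJab
  have habove : BddAbove J := bddAbove_Icc.mono hJab
  have hst : sInf J ≤ sSup J := csInf_le_csSup hne hbelow habove
  have hinf : a ≤ sInf J := le_csInf hne fun x hx ↦ (hJab hx).1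
  have hsup : sSup J ≤ b := csSup_le hne fun x hx ↦ (hJab hx).2
  refine ⟨sInf J, ⟨hinf, hst.trans hsup⟩, sSup J, ⟨hinf.trans hst, hsup⟩, fun f ↦ ?_⟩
  have hIoo : Ioo (sInf J) (sSup J) ⊆ J :=
    IsConnected.Ioo_csInf_csSup_subset ⟨hne, hJ.isPreconnected⟩ hbelow habove
  have hIcc : J ⊆ Icc (sInf J) (sSup J) := subset_Icc_csInf_csSup hbelow habove
  have hae : J =ᵐ[volume] Ioc (sInf J) (sSup J) :=
    (hIcc.eventuallyLE.trans_eq Ioc_ae_eq_Icc.symm).antisymm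
      (Ioo_ae_eq_Ioc.symm.trans_le hIoo.eventuallyLE)
  rw [intervalIntegral.integral_of_le hst, setIntegral_congr_set hae]

variable {κ b ν : ℝ}

lemma exists_norm_integral_fourierMode_mul_powLogWeight_le (a : ℝ) (hν : 0 < ν) (hb : 0 < b)
    (hbκ : b < κ) :
    ∃ C, 0 < C ∧ ∀ k d t, k ≠ 0 → 0 < d → d ≤ t → t ≤ b →
      ‖∫ x in d..t, fourierMode k x * powLogWeight ν κ a x‖ ≤
        C * (powLogWeight ν κ a d / |k|) := by
  obtain ⟨A, hA, hanti⟩ := exists_powLogWeight_le_mul a hν hb hbκ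
  obtain ⟨D, hD, hvar⟩ := exists_integral_abs_deriv_powLogWeight_le a hν hb hbκ
  refine ⟨1 + A + D, by positivity, fun k d t hk hd hdt htb ↦ ?_⟩
  have hsub : Icc d t ⊆ Ioo 0 κ := Icc_subset_Ioo hd (htb.trans_lt hbκ)
  have norm_weight : ∀ x ∈ Icc d t, ‖(powLogWeight ν κ a x : ℂ)‖ = powLogWeight ν κ a x :=
    fun x hx ↦ Complex.norm_of_nonneg (powLogWeight_pos (hsub hx).1 (hsub hx).2).le
  have hderiv : ∀ x ∈ Icc d t, HasDerivAt (fun x ↦ (powLogWeight ν κ a x : ℂ))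
      ((deriv (powLogWeight ν κ a) x : ℝ) : ℂ) x := fun x hx ↦
    (hasDerivAt_powLogWeight ν a (hsub hx).1
      (hsub hx).2).differentiableAt.hasDerivAt.ofReal_comp
  refine (norm_integral_fourierMode_mul_le hk hdt hderiv (ContinuousOn.intervalIntegrable_of_Icc hdt
    (Complex.continuous_ofReal.comp_continuousOn
      ((continuousOn_deriv_powLogWeight ν κ a).mono hsub)))).trans ?_
  simp only [Complex.norm_real (deriv _ _), Real.norm_eq_abs]
  rw [norm_weight d ⟨le_rfl, hdt⟩, norm_weight t ⟨hdt, le_rfl⟩, ← mul_div_assoc]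
  gcongr
  linarith [hanti d t hd hdt htb, hvar d t hd hdt htb]

lemma intervalIntegrable_powLogWeight (a : ℝ) (hν : ν < 1) (hb : 0 < b) (hbκ : b < κ) :
    IntervalIntegrable (powLogWeight ν κ a) volume (-b) b := by
  obtain ⟨_, -, hint⟩ := exists_integral_powLogWeight_le a hν hb hbκ
  have hright := (hint b hb le_rfl).1
  have hleft := ((IntervalIntegrable.iff_comp_neg (by simp)).1 hright).symm
  simp only [powLogWeight_neg, neg_zero] at hleft
  exact hleft.trans hright

lemma intervalIntegrable_fourierMode_mul_powLogWeight (a k : ℝ) (hν : ν < 1) (hb : 0 < b)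
    (hbκ : b < κ) :
    IntervalIntegrable (fun x ↦ fourierMode k x * powLogWeight ν κ a x) volume (-b) b :=
  IntervalIntegrable.continuousOn_mul
    (intervalIntegrable_iff.2 (intervalIntegrable_powLogWeight a hν hb hbκ).def'.ofReal)
    (continuous_fourierMode k).continuousOn

lemma norm_integral_zero_fourierMode_mul_powLogWeight_le {d t : ℝ} (k : ℝ) (ht : 0 ≤ t)
    (htd : t ≤ d) (hdκ : d < κ) (hint : IntervalIntegrable (powLogWeight ν κ a) volume 0 d) :
    ‖∫ x in 0..t, fourierMode k x * powLogWeight ν κ a x‖ ≤ ∫ x in 0..d, powLogWeight ν κ a x := by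
  have hd := ht.trans htd
  have norm_integrand (x : ℝ) :
      ‖fourierMode k x * powLogWeight ν κ a x‖ = |powLogWeight ν κ a x| := by
    rw [norm_mul, norm_fourierMode, one_mul, Complex.norm_real, Real.norm_eq_abs]
  calc ‖∫ x in 0..t, fourierMode k x * powLogWeight ν κ a x‖
      ≤ ∫ x in 0..t, |powLogWeight ν κ a x| := by
        simpa only [norm_integrand] using intervalIntegral.norm_integral_le_integral_norm
          (f := fun x ↦ fourierMode k x * powLogWeight ν κ a x) ht
    _ ≤ ∫ x in 0..d, |powLogWeight ν κ a x| :=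
        intervalIntegral.integral_mono_interval le_rfl ht htd
          (.of_forall fun _ ↦ abs_nonneg _) hint.abs
    _ = ∫ x in 0..d, powLogWeight ν κ a x := by
        refine intervalIntegral.integral_congr_ae (.of_forall fun x hx ↦ ?_)
        rw [uIoc_of_le hd] at hx
        exact abs_of_pos (powLogWeight_pos hx.1 (hx.2.trans_lt hdκ))

lemma exists_norm_integral_zero_fourierMode_mul_powLogWeight_le (a : ℝ) (hν0 : 0 < ν)
    (hν1 : ν < 1) (hb : 0 < b) (hbκ : b < κ) :
    ∃ C, 0 < C ∧ ∀ k t, k ≠ 0 → |k|⁻¹ ≤ b → 0 ≤ t → t ≤ b →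
      ‖∫ x in 0..t, fourierMode k x * powLogWeight ν κ a x‖ ≤
        C * (powLogWeight ν κ a |k|⁻¹ / |k|) := by
  obtain ⟨A, hA, hnear⟩ := exists_integral_powLogWeight_le a hν1 hb hbκ
  obtain ⟨D, hD, hfar⟩ := exists_norm_integral_fourierMode_mul_powLogWeight_le a hν0 hb hbκ
  refine ⟨A + D, by positivity, fun k t hk hkb ht htb ↦ ?_⟩
  have hd : 0 < |k|⁻¹ := by positivity
  have hdκ := hkb.trans_lt hbκ
  obtain ⟨hint, hle⟩ := hnear _ hd hkb
  rw [← div_eq_inv_mul] at hle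
  have hscale : 0 < powLogWeight ν κ a |k|⁻¹ / |k| :=
    div_pos (powLogWeight_pos hd hdκ) (by positivity)
  rw [add_mul]
  rcases le_total t |k|⁻¹ with htk | hkt
  · have near := norm_integral_zero_fourierMode_mul_powLogWeight_le k ht htk hdκ hint
    linarith [mul_pos hD hscale]
  · have near := norm_integral_zero_fourierMode_mul_powLogWeight_le k hd.le le_rfl hdκ hint
    have hintegrable := intervalIntegrable_fourierMode_mul_powLogWeight a k hν1 hb hbκ
    rw [← intervalIntegral.integral_add_adjacent_intervals (b := |k|⁻¹)
      (hintegrable.mono_set (uIcc_subset_uIcc ?_ ?_))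
      (hintegrable.mono_set (uIcc_subset_uIcc ?_ ?_))]
    · exact norm_add_le_of_le (near.trans hle) (hfar k _ t hk hd hkt htb)
    all_goals
      rw [uIcc_of_le (by linarith)]
      constructor <;> linarith

lemma integral_fourierMode_mul_powLogWeight_neg (ν κ a k t : ℝ) :
    ∫ x in 0..-t, fourierMode k x * powLogWeight ν κ a x =
      -∫ x in 0..t, fourierMode (-k) x * powLogWeight ν κ a x := by
  have reflect := intervalIntegral.integral_comp_neg (a := 0) (b := t)
    fun x ↦ fourierMode k x * powLogWeight ν κ a x
  simp only [fourierMode_neg_right, powLogWeight_neg, neg_zero] at reflect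
  rw [reflect, ← intervalIntegral.integral_symm]

lemma exists_norm_setIntegral_fourierMode_mul_powLogWeight_le (a : ℝ) (hν0 : 0 < ν)
    (hν1 : ν < 1) (hb : 0 < b) (hbκ : b < κ) :
    ∃ C, 0 < C ∧ ∀ k, k ≠ 0 → |k|⁻¹ ≤ b → ∀ J ⊆ Icc (-b) b, J.OrdConnected →
      ‖∫ x in J, fourierMode k x * powLogWeight ν κ a x‖ ≤
        C * (powLogWeight ν κ a |k|⁻¹ / |k|) := by
  obtain ⟨C, hC, hle⟩ :=
    exists_norm_integral_zero_fourierMode_mul_powLogWeight_le a hν0 hν1 hb hbκ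
  refine ⟨2 * C, by positivity, fun k hk hkb J hJb hJ ↦ ?_⟩
  have from_zero : ∀ t ∈ Icc (-b) b,
      ‖∫ x in 0..t, fourierMode k x * powLogWeight ν κ a x‖ ≤
        C * (powLogWeight ν κ a |k|⁻¹ / |k|) := by
    intro t ht
    rcases le_total 0 t with h0t | ht0
    · exact hle k t hk hkb h0t ht.2
    · rw [← neg_neg t, integral_fourierMode_mul_powLogWeight_neg, norm_neg, ← abs_neg k]
      exact hle (-k) (-t) (neg_ne_zero.2 hk) (by rwa [abs_neg]) (by linarith) (by linarith [ht.1])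
  obtain ⟨s, hs, t, ht, hst⟩ :=
    exists_setIntegral_eq_intervalIntegral_of_ordConnected (E := ℂ) (by linarith) hJ hJb
  have hintegrable : ∀ t ∈ Icc (-b) b,
      IntervalIntegrable (fun x ↦ fourierMode k x * powLogWeight ν κ a x) volume 0 t := by
    intro t ht
    rw [← uIcc_of_le (by linarith)] at ht
    refine (intervalIntegrable_fourierMode_mul_powLogWeight a k hν1 hb hbκ).mono_set
      (uIcc_subset_uIcc ?_ ht)
    rw [uIcc_of_le (by linarith)]
    constructor <;> linarith
  rw [hst, ← intervalIntegral.integral_interval_sub_left (hintegrable t ht) (hintegrable s hs)]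
  linarith [norm_sub_le_of_le (from_zero t ht) (from_zero s hs)]

lemma exists_norm_setIntegral_fourierMode_mul_le_of_eq_mul_powLogWeight {φ V : ℝ → ℝ}
    {a : ℝ} (hφ : BoundedVariationOn φ (Ico (-b) b))
    (hV : ∀ x ∈ Ico (-b) b, V x = φ x * powLogWeight ν κ a x) (hν0 : 0 < ν) (hν1 : ν < 1)
    (hb : 1 / 2 ≤ b) (hbκ : b < κ) (hκ : 1 ≤ κ) :
    ∃ C, 0 ≤ C ∧ ∀ k, 2 ≤ |k| →
      ‖∫ x in Ico (-b) b, fourierMode k x * V x‖ ≤ C * (|k| ^ (ν - 1) * log |k| ^ (-a)) := by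
  have hb0 : 0 < b := by linarith
  obtain ⟨A, hA, hmean⟩ := exists_norm_setIntegral_smul_le_of_boundedVariationOn (E := ℂ)
    (μ := volume) ordConnected_Ico hφ
  obtain ⟨B, hB, hosc⟩ :=
    exists_norm_setIntegral_fourierMode_mul_powLogWeight_le a hν0 hν1 hb0 hbκ
  obtain ⟨D, hD, hrate⟩ := exists_powLogWeight_inv_div_le ν a hκ
  refine ⟨A * (B * D), by positivity, fun k hk ↦ ?_⟩
  have hinv : |k|⁻¹ ≤ b := (inv_anti₀ two_pos hk).trans (by linarith)
  have hint : IntegrableOn (fun x ↦ fourierMode k x * powLogWeight ν κ a x) (Ico (-b) b) :=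
    (intervalIntegrable_iff_integrableOn_Ico_of_le (by linarith)).1
      (intervalIntegrable_fourierMode_mul_powLogWeight a k hν1 hb0 hbκ)
  calc ‖∫ x in Ico (-b) b, fourierMode k x * V x‖
      = ‖∫ x in Ico (-b) b, φ x • (fourierMode k x * powLogWeight ν κ a x)‖ := by
        congr 1
        refine setIntegral_congr_fun measurableSet_Ico fun x hx ↦ ?_
        simp only [hV x hx, Complex.real_smul, Complex.ofReal_mul]
        ring
    _ ≤ A * (B * (powLogWeight ν κ a |k|⁻¹ / |k|)) := hmean _ _ hint fun J hJ ↦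
          hosc k (abs_pos.1 (by linarith)) hinv J (hJ.trans Ico_subset_Icc_self)
    _ ≤ A * (B * (D * (|k| ^ (ν - 1) * log |k| ^ (-a)))) := by
        gcongr
        exact hrate _ hk
    _ = _ := by ring

end Oscillation

section FourierCoefficient

lemma fc_eq_setIntegral_Ico {f : ℝ → ℂ} (hf : Function.Periodic f (2 * π)) (k : ℤ) :
    fc f k = (1 / (2 * π)) * ∫ x in Ico (-π) π, fourierMode k x * f x := by
  have shift := ((periodic_fourierMode_intCast k).mul hf).intervalIntegral_add_eq 0 (-π)
  rw [zero_add, show -π + 2 * π = π by ring,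
    intervalIntegral.integral_of_le (by linarith [pi_pos] : -π ≤ π),
    ← integral_Ico_eq_integral_Ioc] at shift
  simp only [Pi.mul_apply] at shift
  rw [← shift]
  simp only [fc, fourierMode, Complex.ofReal_intCast]

lemma norm_fc_le {f : ℝ → ℂ} (hf : Function.Periodic f (2 * π)) (k : ℤ) :
    ‖fc f k‖ ≤ ‖∫ x in Ico (-π) π, fourierMode k x * f x‖ := by
  have norm_factor : ‖(1 / (2 * π) : ℂ)‖ = 1 / (2 * π) := by
    rw [norm_div, norm_mul, Complex.norm_of_nonneg pi_pos.le, norm_one, Complex.norm_ofNat]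
  rw [fc_eq_setIntegral_Ico hf, norm_mul, norm_factor]
  exact mul_le_of_le_one_left (norm_nonneg _)
    ((div_le_one (by positivity)).2 (by linarith [pi_gt_three]))

end FourierCoefficient

/-- Fourier decay for the (possibly unbounded) potential
`V(x) = φ(x)/(|x|^ν (log|κ/x|)^a)` with `φ` of bounded variation. -/
theorem unbounded_potential_fourier_decay
    (φ V : ℝ → ℝ) (ν κ a : ℝ)
    (hφ : BoundedVariationOn φ (Set.Ico (-π) π))
    (hν0 : 0 < ν) (hν1 : ν < 1) (hκ : π < κ)
    (hper : Function.Periodic V (2 * π))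
    (hV : ∀ x ∈ Set.Ico (-π) π, V x = φ x / (|x| ^ ν * Real.log |κ / x| ^ a)) :
    IntegrableOn V (Set.Ico (-π) π) ∧
    ∃ C : ℝ, 0 < C ∧
      ‖fc (fun x => (V x : ℂ)) 0‖ ≤ C ∧
      ∀ k : ℤ, 2 ≤ |k| →
        ‖fc (fun x => (V x : ℂ)) k‖ ≤ C * |(k : ℝ)| ^ (ν - 1) * Real.log |(k : ℝ)| ^ (-a) := by
  have hVw : ∀ x ∈ Set.Ico (-π) π, V x = φ x * powLogWeight ν κ a x := fun x hx ↦
    (hV x hx).trans (div_eq_mul_inv _ _)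
  have hw : IntegrableOn (powLogWeight ν κ a) (Set.Ico (-π) π) :=
    (intervalIntegrable_iff_integrableOn_Ico_of_le (by linarith [pi_pos])).1
      (intervalIntegrable_powLogWeight a hν1 pi_pos hκ)
  refine ⟨(integrableOn_smul_of_boundedVariationOn Set.ordConnected_Ico hφ hw).congr_fun
    (fun x hx ↦ (hVw x hx).symm) measurableSet_Ico, ?_⟩
  obtain ⟨A, hA, hdecay⟩ := exists_norm_setIntegral_fourierMode_mul_le_of_eq_mul_powLogWeight
    hφ hVw hν0 hν1 (by linarith [pi_gt_three]) hκ (by linarith [pi_gt_three])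
  refine ⟨‖fc (fun x ↦ (V x : ℂ)) 0‖ + A + 1, by positivity, by linarith, fun k hk ↦ ?_⟩
  have hk' : (1 : ℝ) ≤ |(k : ℝ)| := by exact_mod_cast one_le_two.trans hk
  have coeff_le := (norm_fc_le (hper.comp Complex.ofReal) k).trans (hdecay k (by exact_mod_cast hk))
  rw [mul_assoc]
  refine coeff_le.trans (mul_le_mul_of_nonneg_right ?_ ?_)
  · linarith [norm_nonneg (fc (fun x ↦ (V x : ℂ)) 0)]
  · exact mul_nonneg (by positivity) (rpow_nonneg (log_nonneg hk') _)
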